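/- arXiv:1412.1414 — 3 statements merged into one kernel-verified Lean document; each statement's English description precedes it below -/
import Mathlib

section
/- Let d, p ≥ 1 and let (X, Y) be a random vector with X valued in ℝ^d and Y in ℝ^p, satisfying E‖X‖ < ∞ and E‖Y‖ < ∞. Then the squared distance covariance V²(X,Y) = ∫_{ℝ^d × ℝ^p} |φ_{X,Y}(t,s) − φ_X(t)·φ_Y(s)|² w(t,s) dt ds satisfies V²(X,Y) ≥ 0, and V²(X,Y) = 0 if and only if X and Y are independent. -/
open MeasureTheory ProbabilityTheory Complex
open scoped RealInnerProductSpace ENNReal BigOperators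

/-- The constant `c_l = π^{(1+l)/2} / Γ((1+l)/2)`. -/
noncomputable def cConst (l : ℕ) : ℝ :=
  Real.pi ^ ((1 + (l : ℝ)) / 2) / Real.Gamma ((1 + (l : ℝ)) / 2)

/-- The weight function `w(t,s) = (c_d c_p ‖t‖^{1+d} ‖s‖^{1+p})⁻¹`. -/
noncomputable def dCovWeight (d p : ℕ)
    (t : EuclideanSpace ℝ (Fin d)) (s : EuclideanSpace ℝ (Fin p)) : ℝ :=
  (cConst d * cConst p * ‖t‖ ^ (1 + d) * ‖s‖ ^ (1 + p))⁻¹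

/-- The squared distance covariance
`V²(X,Y) = ∫ |φ_{X,Y}(t,s) − φ_X(t) φ_Y(s)|² w(t,s) dt ds`, as an extended real. -/
noncomputable def distCov2 (d p : ℕ) {Ω : Type*} [MeasurableSpace Ω] (P : Measure Ω)
    (X : Ω → EuclideanSpace ℝ (Fin d)) (Y : Ω → EuclideanSpace ℝ (Fin p)) : ℝ≥0∞ :=
  ∫⁻ ts : EuclideanSpace ℝ (Fin d) × EuclideanSpace ℝ (Fin p),
    ENNReal.ofReal
      (‖(∫ ω, Complex.exp (Complex.I * ((⟪ts.1, X ω⟫ + ⟪ts.2, Y ω⟫ : ℝ) : ℂ)) ∂P)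
          - (∫ ω, Complex.exp (Complex.I * ((⟪ts.1, X ω⟫ : ℝ) : ℂ)) ∂P)
            * ∫ ω, Complex.exp (Complex.I * ((⟪ts.2, Y ω⟫ : ℝ) : ℂ)) ∂P‖ ^ 2
        * dCovWeight d p ts.1 ts.2)

theorem cConst_pos (l : ℕ) : 0 < cConst l := by
  unfold cConst
  have h : (0 : ℝ) < (1 + (l : ℝ)) / 2 := by positivity
  exact div_pos (Real.rpow_pos_of_pos Real.pi_pos _) (Real.Gamma_pos_of_pos h)

theorem continuous_cf {E Ω : Type*} [TopologicalSpace E] [FirstCountableTopology E]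
    [MeasurableSpace Ω] (P : Measure Ω)
    [IsProbabilityMeasure P] (f : E → Ω → ℝ) (hf : ∀ t, Measurable (f t))
    (hc : ∀ ω, Continuous (fun t => f t ω)) :
    Continuous (fun t => ∫ ω, Complex.exp (Complex.I * ((f t ω : ℝ) : ℂ)) ∂P) := by
  apply continuous_of_dominated (bound := fun _ => (1 : ℝ))
  · intro t
    have := hf t
    exact Measurable.aestronglyMeasurable (by fun_prop)
  · intro t
    refine Filter.Eventually.of_forall fun ω => ?_
    rw [mul_comm, Complex.norm_exp_ofReal_mul_I]
  · exact integrable_const _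
  · refine Filter.Eventually.of_forall fun ω => ?_
    have := hc ω
    fun_prop

theorem indep_iff_cf
    (d p : ℕ)
    {Ω : Type*} [MeasurableSpace Ω] (P : Measure Ω) [IsProbabilityMeasure P]
    (X : Ω → EuclideanSpace ℝ (Fin d)) (Y : Ω → EuclideanSpace ℝ (Fin p))
    (hX : Measurable X) (hY : Measurable Y) :
    IndepFun X Y P ↔ ∀ t s, (∫ ω, Complex.exp (Complex.I * ((⟪t, X ω⟫ + ⟪s, Y ω⟫ : ℝ) : ℂ)) ∂P)
          = (∫ ω, Complex.exp (Complex.I * ((⟪t, X ω⟫ : ℝ) : ℂ)) ∂P)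
            * ∫ ω, Complex.exp (Complex.I * ((⟪s, Y ω⟫ : ℝ) : ℂ)) ∂P := by
  rw [indepFun_iff_charFun_prod hX.aemeasurable hY.aemeasurable]
  have h1 : ∀ t, charFun (P.map X) t = ∫ ω, Complex.exp (Complex.I * ((⟪t, X ω⟫ : ℝ) : ℂ)) ∂P := by
    intro t
    rw [charFun_apply, integral_map hX.aemeasurable (Measurable.aestronglyMeasurable (by fun_prop))]
    simp only [mul_comm, real_inner_comm]
  have h2 : ∀ t, charFun (P.map Y) t = ∫ ω, Complex.exp (Complex.I * ((⟪t, Y ω⟫ : ℝ) : ℂ)) ∂P := by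
    intro t
    rw [charFun_apply, integral_map hY.aemeasurable (Measurable.aestronglyMeasurable (by fun_prop))]
    simp only [mul_comm, real_inner_comm]
  have h3 : ∀ t : WithLp 2 (EuclideanSpace ℝ (Fin d) × EuclideanSpace ℝ (Fin p)),
      charFun (P.map fun ω => WithLp.toLp 2 (X ω, Y ω)) t
      = ∫ ω, Complex.exp (Complex.I * ((⟪t.fst, X ω⟫ + ⟪t.snd, Y ω⟫ : ℝ) : ℂ)) ∂P := by
    intro t
    rw [charFun_apply, integral_map (Measurable.aemeasurable (by fun_prop))
      (Measurable.aestronglyMeasurable (by fun_prop))]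
    refine integral_congr_ae (Filter.Eventually.of_forall fun ω => ?_)
    simp only [WithLp.prod_inner_apply]
    rw [mul_comm, real_inner_comm, real_inner_comm (WithLp.ofLp t).2]
    rfl
  simp only [h1, h2, h3]
  exact ⟨fun h t s => h (WithLp.toLp 2 (t, s)), fun h t => h _ _⟩

theorem stmt_1
    (d p : ℕ) (hd : 1 ≤ d) (hp : 1 ≤ p)
    {Ω : Type*} [MeasurableSpace Ω] (P : Measure Ω) [IsProbabilityMeasure P]
    (X : Ω → EuclideanSpace ℝ (Fin d)) (Y : Ω → EuclideanSpace ℝ (Fin p))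
    (hX : Measurable X) (hY : Measurable Y)
    (hX1 : Integrable (fun ω => ‖X ω‖) P)
    (hY1 : Integrable (fun ω => ‖Y ω‖) P) :
    0 ≤ distCov2 d p P X Y
    ∧ (distCov2 d p P X Y = 0 ↔ IndepFun X Y P) := by
  refine ⟨zero_le, ?_⟩
  rw [indep_iff_cf d p P X Y hX hY]
  have hc1 : Continuous (fun ts : EuclideanSpace ℝ (Fin d) × EuclideanSpace ℝ (Fin p) =>
      ∫ ω, Complex.exp (Complex.I * ((⟪ts.1, X ω⟫ + ⟪ts.2, Y ω⟫ : ℝ) : ℂ)) ∂P) :=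
    continuous_cf P (E := EuclideanSpace ℝ (Fin d) × EuclideanSpace ℝ (Fin p))
      (fun ts ω => ⟪ts.1, X ω⟫ + ⟪ts.2, Y ω⟫) (fun _ => by fun_prop)
      (fun _ => by fun_prop)
  have hc2 : Continuous (fun ts : EuclideanSpace ℝ (Fin d) × EuclideanSpace ℝ (Fin p) =>
      ∫ ω, Complex.exp (Complex.I * ((⟪ts.1, X ω⟫ : ℝ) : ℂ)) ∂P) :=
    continuous_cf P (E := EuclideanSpace ℝ (Fin d) × EuclideanSpace ℝ (Fin p))
      (fun ts ω => ⟪ts.1, X ω⟫) (fun _ => by fun_prop) (fun _ => by fun_prop)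
  have hc3 : Continuous (fun ts : EuclideanSpace ℝ (Fin d) × EuclideanSpace ℝ (Fin p) =>
      ∫ ω, Complex.exp (Complex.I * ((⟪ts.2, Y ω⟫ : ℝ) : ℂ)) ∂P) :=
    continuous_cf P (E := EuclideanSpace ℝ (Fin d) × EuclideanSpace ℝ (Fin p))
      (fun ts ω => ⟪ts.2, Y ω⟫) (fun _ => by fun_prop) (fun _ => by fun_prop)
  have hw : Measurable (fun ts : EuclideanSpace ℝ (Fin d) × EuclideanSpace ℝ (Fin p) =>
      dCovWeight d p ts.1 ts.2) := by
    unfold dCovWeight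
    fun_prop
  constructor
  · intro h
    unfold distCov2 at h
    rw [lintegral_eq_zero_iff
      (by exact ((((hc1.sub (hc2.mul hc3)).norm.pow 2).measurable).mul hw).ennreal_ofReal)] at h
    have : Nonempty (Fin d) := ⟨⟨0, hd⟩⟩
    have : Nonempty (Fin p) := ⟨⟨0, hp⟩⟩
    have ht : ∀ᵐ ts : EuclideanSpace ℝ (Fin d) × EuclideanSpace ℝ (Fin p), ts.1 ≠ 0 :=
      Measure.quasiMeasurePreserving_fst.ae (p := fun t => t ≠ 0) (Measure.ae_ne volume 0)
    have hs : ∀ᵐ ts : EuclideanSpace ℝ (Fin d) × EuclideanSpace ℝ (Fin p), ts.2 ≠ 0 :=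
      Measure.quasiMeasurePreserving_snd.ae (p := fun t => t ≠ 0) (Measure.ae_ne volume 0)
    have hae := (Continuous.ae_eq_iff_eq (μ := volume) hc1 (hc2.mul hc3)).1 (by
      filter_upwards [h, ht, hs] with ts h1 h2 h3
      have hpos : 0 < dCovWeight d p ts.1 ts.2 := by
        unfold dCovWeight
        have := cConst_pos d
        have := cConst_pos p
        have := norm_pos_iff.2 h2
        have := norm_pos_iff.2 h3
        positivity
      simp only [Pi.zero_apply, ENNReal.ofReal_eq_zero] at h1
      have h4 := nonpos_of_mul_nonpos_left h1 hpos
      have h5 := pow_eq_zero_iff (two_ne_zero) |>.1 (le_antisymm h4 (sq_nonneg _))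
      exact sub_eq_zero.1 (norm_eq_zero.1 h5))
    intro t s
    exact congrFun hae (t, s)
  · intro h
    unfold distCov2
    simp [h, -ofReal_add]
end

section
/- Let n ≥ 1, d, p ≥ 1, and let x_1,…,x_n ∈ ℝ^d and y_1,…,y_n ∈ ℝ^p. Define the Euclidean distance matrices G^X = (‖x_i − x_j‖)_{1≤i,j≤n} and G^Y = (‖y_i − y_j‖)_{1≤i,j≤n}. Then Tr[G^X H G^Y H] ≥ 0; in particular the empirical squared distance covariance V²_n = (1/n²)·Tr[G^X H G^Y H] is nonnegative. -/
open Matrix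
open scoped BigOperators

/-- The `n × n` centering matrix `H = Iₙ - (1/n) Jₙ`. -/
noncomputable def centeringMatrix (n : ℕ) : Matrix (Fin n) (Fin n) ℝ :=
  1 - (n : ℝ)⁻¹ • Matrix.of (fun _ _ => (1 : ℝ))

open MeasureTheory in
lemma min_form_nonneg {n : ℕ} (c a : Fin n → ℝ) (m : ℝ) (hm : ∀ i, m ≤ a i) :
    0 ≤ ∑ i, ∑ j, c i * c j * (min (a i) (a j) - m) := by
  have key : ∀ i j, min (a i) (a j) - m =
      ∫ t : ℝ, (Set.Ioc m (min (a i) (a j))).indicator 1 t := by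
    intro i j
    rw [integral_indicator_one measurableSet_Ioc]
    simp [hm i, hm j]
  have hint : ∀ i j, Integrable
      (fun t : ℝ => c i * c j * (Set.Ioc m (min (a i) (a j))).indicator (1 : ℝ → ℝ) t) := by
    intro i j
    apply Integrable.const_mul
    rw [integrable_indicator_iff measurableSet_Ioc]
    simp only [Pi.one_def]
    exact integrableOn_const (by simp)
  have h2 : ∑ i, ∑ j, c i * c j * (min (a i) (a j) - m) =
      ∫ t : ℝ, ∑ i, ∑ j, c i * c j * (Set.Ioc m (min (a i) (a j))).indicator (1 : ℝ → ℝ) t := by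
    rw [integral_finsetSum _ (fun i _ => integrable_finsetSum _ fun j _ => hint i j)]
    refine Finset.sum_congr rfl fun i _ => ?_
    rw [integral_finsetSum _ (fun j _ => hint i j)]
    refine Finset.sum_congr rfl fun j _ => ?_
    rw [integral_const_mul, key]
  rw [h2]
  refine integral_nonneg fun t => ?_
  have : ∑ i, ∑ j, c i * c j * (Set.Ioc m (min (a i) (a j))).indicator (1 : ℝ → ℝ) t =
      (∑ i, c i * (Set.Ioc m (a i)).indicator (1 : ℝ → ℝ) t) ^ 2 := by
    rw [sq, Finset.sum_mul_sum]
    refine Finset.sum_congr rfl fun i _ => Finset.sum_congr rfl fun j _ => ?_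
    simp only [Set.indicator_apply, Set.mem_Ioc, le_min_iff, Pi.one_apply]
    split_ifs <;> first | (exfalso; tauto) | simp
  simp only [this, Pi.zero_apply]
  positivity

lemma abs_form_nonpos {n : ℕ} (c a : Fin n → ℝ) (hc : ∑ i, c i = 0) :
    ∑ i, ∑ j, c i * c j * |a i - a j| ≤ 0 := by
  have h := min_form_nonneg c a (-∑ i, |a i|) (fun i => by
    have := Finset.single_le_sum (f := fun i => |a i|) (fun i _ => abs_nonneg _) (Finset.mem_univ i)
    have := neg_abs_le (a i)
    linarith)
  set m := -∑ i, |a i|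
  have e : ∀ i j, c i * c j * |a i - a j| =
      (c i * (a i - 2 * m)) * c j + c i * (c j * a j)
        + c i * (c j * (2 * m)) - 2 * (c i * c j * (min (a i) (a j) - m)) - c i * c j * (2 * m) := by
    intro i j
    rcases le_total (a i) (a j) with h | h
    · rw [min_eq_left h, abs_of_nonpos (by linarith)]; ring
    · rw [min_eq_right h, abs_of_nonneg (by linarith)]; ring
  have e' : ∀ i j, c i * c j * |a i - a j| =
      (c i * a i) * c j + c i * (c j * a j)
        - (c i * (2 * m)) * c j - 2 * (c i * c j * (min (a i) (a j) - m)) := by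
    intro i j
    rw [e]; ring
  simp only [e', Finset.sum_sub_distrib, Finset.sum_add_distrib, ← Finset.mul_sum, hc,
    ← Finset.sum_mul]
  linarith

open MeasureTheory in
lemma integral_abs_inner {d : ℕ} (hd : 1 ≤ d) : ∃ C : ℝ, 0 < C ∧ ∀ v : EuclideanSpace ℝ (Fin d),
    ∫ u in Metric.closedBall (0 : EuclideanSpace ℝ (Fin d)) 1, |inner ℝ u v| = C * ‖v‖ := by
  set B := Metric.closedBall (0 : EuclideanSpace ℝ (Fin d)) 1 with hB
  let e : EuclideanSpace ℝ (Fin d) := EuclideanSpace.single ⟨0, hd⟩ 1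
  have he : ‖e‖ = 1 := by simp [e]
  refine ⟨∫ u in B, |inner ℝ u e|, ?_, ?_⟩
  · rw [setIntegral_pos_iff_support_of_nonneg_ae]
    · have ho : IsOpen ((Function.support fun u => |inner ℝ u e|) ∩ Metric.ball 0 1) := by
        apply IsOpen.inter _ Metric.isOpen_ball
        apply Continuous.isOpen_support
        fun_prop
      refine lt_of_lt_of_le (ho.measure_pos volume ⟨(1/2 : ℝ) • e, ?_, ?_⟩)
        (measure_mono (Set.inter_subset_inter_right _ Metric.ball_subset_closedBall))
      · simp [inner_smul_left, he]
      · simp [norm_smul, he]; norm_num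
    · exact Filter.Eventually.of_forall fun u => abs_nonneg _
    · exact ContinuousOn.integrableOn_compact (isCompact_closedBall _ _) (by fun_prop)
  · intro v
    have hn : ‖v‖ = ‖‖v‖ • e‖ := by simp [norm_smul, he]
    let R := Submodule.reflection (ℝ ∙ (v - ‖v‖ • e))ᗮ
    have hR : R v = ‖v‖ • e := Submodule.reflection_sub hn
    have hp := R.measurePreserving
    have h := hp.setIntegral_preimage_emb R.toHomeomorph.measurableEmbedding
      (fun u => |inner ℝ u (‖v‖ • e)|) B
    have hpre : R ⁻¹' B = B := by
      ext u; simp [hB]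
    rw [hpre, ← hR] at h
    simp only [LinearIsometryEquiv.inner_map_map] at h
    rw [h, hR, mul_comm, ← integral_const_mul]
    simp [inner_smul_right, abs_mul]

open MeasureTheory in
lemma norm_form_nonpos {n d : ℕ} (hd : 1 ≤ d) (c : Fin n → ℝ) (hc : ∑ i, c i = 0)
    (x : Fin n → EuclideanSpace ℝ (Fin d)) :
    ∑ i, ∑ j, c i * c j * ‖x i - x j‖ ≤ 0 := by
  obtain ⟨C, hC, h⟩ := integral_abs_inner hd
  have hint : ∀ i j, IntegrableOn (fun u => c i * c j * |inner ℝ u (x i - x j)|)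
      (Metric.closedBall (0 : EuclideanSpace ℝ (Fin d)) 1) := fun i j =>
    ContinuousOn.integrableOn_compact (isCompact_closedBall _ _) (by fun_prop)
  have h2 : C * ∑ i, ∑ j, c i * c j * ‖x i - x j‖ =
      ∫ u in Metric.closedBall (0 : EuclideanSpace ℝ (Fin d)) 1,
        ∑ i, ∑ j, c i * c j * |inner ℝ u (x i - x j)| := by
    rw [integral_finsetSum _ (fun i _ => integrable_finsetSum _ fun j _ => hint i j),
      Finset.mul_sum]
    refine Finset.sum_congr rfl fun i _ => ?_
    rw [integral_finsetSum _ (fun j _ => hint i j), Finset.mul_sum]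
    refine Finset.sum_congr rfl fun j _ => ?_
    rw [integral_const_mul, h]
    ring
  have h3 : C * ∑ i, ∑ j, c i * c j * ‖x i - x j‖ ≤ 0 := by
    rw [h2]
    refine integral_nonpos fun u => ?_
    simp only [inner_sub_right]
    exact abs_form_nonpos c (fun i => inner ℝ u (x i)) hc
  by_contra hcon
  push Not at hcon
  have := mul_pos hC hcon
  linarith

lemma centering_transpose (n : ℕ) : (centeringMatrix n)ᵀ = centeringMatrix n := by
  ext i j
  simp [centeringMatrix, Matrix.one_apply, eq_comm]

lemma centering_sum {n : ℕ} (hn : 1 ≤ n) (v : Fin n → ℝ) :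
    ∑ i, (centeringMatrix n *ᵥ v) i = 0 := by
  have : (n : ℝ) ≠ 0 := by positivity
  simp [centeringMatrix, Matrix.mulVec, dotProduct, sub_mul, Finset.sum_sub_distrib,
    Matrix.one_apply, ← Finset.mul_sum, this]

lemma centering_sq {n : ℕ} (hn : 1 ≤ n) :
    centeringMatrix n * centeringMatrix n = centeringMatrix n := by
  have : (n : ℝ) ≠ 0 := by positivity
  have hJ : (Matrix.of (fun _ _ => (1 : ℝ)) : Matrix (Fin n) (Fin n) ℝ) *
      Matrix.of (fun _ _ => (1 : ℝ)) = (n : ℝ) • Matrix.of (fun _ _ => (1 : ℝ)) := by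
    ext i j; simp [Matrix.mul_apply]
  simp only [centeringMatrix, Matrix.mul_sub, Matrix.sub_mul, Matrix.one_mul, Matrix.mul_one,
    Matrix.smul_mul, Matrix.mul_smul, hJ, smul_smul]
  simp [this]

lemma centered_psd {n d : ℕ} (hn : 1 ≤ n) (hd : 1 ≤ d) (x : Fin n → EuclideanSpace ℝ (Fin d)) :
    (-(centeringMatrix n * (Matrix.of fun i j => ‖x i - x j‖) * centeringMatrix n)).PosSemidef := by
  refine .of_dotProduct_mulVec_nonneg ?_ fun v => ?_
  · have hG : (Matrix.of fun i j => ‖x i - x j‖)ᵀ = (Matrix.of fun i j => ‖x i - x j‖) := by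
      ext i j; simp [norm_sub_rev]
    rw [Matrix.IsHermitian, Matrix.conjTranspose_eq_transpose_of_trivial]
    simp only [Matrix.transpose_neg, Matrix.transpose_mul, centering_transpose, hG, Matrix.mul_assoc]
  · have h := norm_form_nonpos hd (centeringMatrix n *ᵥ v) (centering_sum hn v) x
    rw [Matrix.neg_mulVec, dotProduct_neg, star_trivial, ← Matrix.mulVec_mulVec,
      ← Matrix.mulVec_mulVec, Matrix.dotProduct_mulVec, ← Matrix.mulVec_transpose,
      centering_transpose]
    set w := centeringMatrix n *ᵥ v
    have : w ⬝ᵥ (Matrix.of fun i j => ‖x i - x j‖) *ᵥ w =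
        ∑ i, ∑ j, w i * w j * ‖x i - x j‖ := by
      simp only [dotProduct, Matrix.mulVec, Finset.mul_sum, Matrix.of_apply]
      refine Finset.sum_congr rfl fun i _ => Finset.sum_congr rfl fun j _ => ?_
      ring
    rw [this]
    linarith

lemma trace_mul_psd {n : ℕ} {A B : Matrix (Fin n) (Fin n) ℝ} (hA : A.PosSemidef)
    (hB : B.PosSemidef) : 0 ≤ (A * B).trace := by
  have h := (hA.hadamard hB.transpose).dotProduct_mulVec_nonneg (fun _ => 1)
  simpa [dotProduct, Matrix.mulVec, Matrix.trace, Matrix.mul_apply, Matrix.hadamard_apply] using h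

theorem stmt_5 (n : ℕ) (hn : 1 ≤ n) (d p : ℕ) (hd : 1 ≤ d) (hp : 1 ≤ p)
    (x : Fin n → EuclideanSpace ℝ (Fin d)) (y : Fin n → EuclideanSpace ℝ (Fin p)) :
    0 ≤ ((Matrix.of fun i j => ‖x i - x j‖) * centeringMatrix n
          * (Matrix.of fun i j => ‖y i - y j‖) * centeringMatrix n).trace
    ∧ 0 ≤ (1 / (n : ℝ) ^ 2) * ((Matrix.of fun i j => ‖x i - x j‖) * centeringMatrix n
          * (Matrix.of fun i j => ‖y i - y j‖) * centeringMatrix n).trace := by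
  have main : 0 ≤ ((Matrix.of fun i j => ‖x i - x j‖) * centeringMatrix n
          * (Matrix.of fun i j => ‖y i - y j‖) * centeringMatrix n).trace := by
    have h := trace_mul_psd (centered_psd hn hd x) (centered_psd hn hp y)
    set X : Matrix (Fin n) (Fin n) ℝ := Matrix.of fun i j => ‖x i - x j‖
    set Y : Matrix (Fin n) (Fin n) ℝ := Matrix.of fun i j => ‖y i - y j‖
    set H := centeringMatrix n
    have hH : H * H = H := centering_sq hn
    have e : (-(H * X * H)) * (-(H * Y * H)) = H * (X * H * Y * H) := by
      rw [neg_mul_neg]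
      calc H * X * H * (H * Y * H) = H * X * (H * H) * Y * H := by simp only [Matrix.mul_assoc]
        _ = _ := by rw [hH]; simp only [Matrix.mul_assoc]
    rw [e, Matrix.trace_mul_comm, Matrix.mul_assoc, hH] at h
    exact h
  exact ⟨main, by positivity⟩
end

section
/- Let n ≥ 1 and let K and L be symmetric real n × n matrices. For indices i, j, q, r in {1,…,n} define h_{ijqr} = (1/4!)·Σ_{(t,u,v,w)} [K_{tu}·L_{tu} + K_{tu}·L_{vw} − 2·K_{tu}·L_{tv}], the sum being taken over all 24 permutations (t,u,v,w) of (i,j,q,r). Then (1/n⁴)·Σ_{i,j,q,r=1}^n h_{ijqr} = (1/n²)·Tr[K H L H]; that is, the empirical HSIC equals the V-statistic with symmetrized kernel h. -/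
open Matrix
open scoped BigOperators

/-- The symmetrized kernel `h_{ijqr}`: the average over all `4! = 24` permutations
`(t,u,v,w)` of `(i,j,q,r)` of `K_{tu} L_{tu} + K_{tu} L_{vw} - 2 K_{tu} L_{tv}`. -/
noncomputable def symmKernel {n : ℕ} (K L : Matrix (Fin n) (Fin n) ℝ)
    (i j q r : Fin n) : ℝ :=
  (1 / (Nat.factorial 4 : ℝ)) * ∑ σ : Equiv.Perm (Fin 4),
    (K (![i, j, q, r] (σ 0)) (![i, j, q, r] (σ 1)) * L (![i, j, q, r] (σ 0)) (![i, j, q, r] (σ 1))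
      + K (![i, j, q, r] (σ 0)) (![i, j, q, r] (σ 1))
        * L (![i, j, q, r] (σ 2)) (![i, j, q, r] (σ 3))
      - 2 * K (![i, j, q, r] (σ 0)) (![i, j, q, r] (σ 1))
        * L (![i, j, q, r] (σ 0)) (![i, j, q, r] (σ 2)))

theorem sum_four {n : ℕ} (F : (Fin 4 → Fin n) → ℝ) :
    ∑ i, ∑ j, ∑ q, ∑ r, F ![i, j, q, r] = ∑ x : Fin 4 → Fin n, F x := by
  let e : (Fin n × Fin n × Fin n × Fin n) ≃ (Fin 4 → Fin n) :=
    { toFun := fun p => ![p.1, p.2.1, p.2.2.1, p.2.2.2]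
      invFun := fun x => (x 0, x 1, x 2, x 3)
      left_inv := fun p => rfl
      right_inv := fun x => by
        ext k
        fin_cases k <;> rfl }
  rw [← Equiv.sum_comp e F]
  simp only [Fintype.sum_prod_type]
  rfl

theorem sum_perm {n : ℕ} (σ : Equiv.Perm (Fin 4)) (F : (Fin 4 → Fin n) → ℝ) :
    ∑ x : Fin 4 → Fin n, F (fun k => x (σ k)) = ∑ x : Fin 4 → Fin n, F x :=
  Equiv.sum_comp (Equiv.arrowCongr σ.symm (Equiv.refl (Fin n))) F

/-- unsymmetrized kernel -/
def kern {n : ℕ} (K L : Matrix (Fin n) (Fin n) ℝ) (x : Fin 4 → Fin n) : ℝ :=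
  K (x 0) (x 1) * L (x 0) (x 1) + K (x 0) (x 1) * L (x 2) (x 3)
    - 2 * K (x 0) (x 1) * L (x 0) (x 2)

theorem sum_symm {n : ℕ} (K L : Matrix (Fin n) (Fin n) ℝ) :
    ∑ i, ∑ j, ∑ q, ∑ r, symmKernel K L i j q r
      = ∑ i, ∑ j, ∑ q, ∑ r, kern K L ![i, j, q, r] := by
  rw [sum_four (kern K L)]
  have h1 : ∀ i j q r, symmKernel K L i j q r = (fun x : Fin 4 → Fin n =>
      (1 / (Nat.factorial 4 : ℝ)) * ∑ σ : Equiv.Perm (Fin 4), kern K L (fun k => x (σ k)))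
        ![i, j, q, r] := fun i j q r => rfl
  simp only [h1]
  rw [sum_four (fun x : Fin 4 → Fin n =>
      (1 / (Nat.factorial 4 : ℝ)) * ∑ σ : Equiv.Perm (Fin 4), kern K L (fun k => x (σ k)))]
  rw [← Finset.mul_sum, Finset.sum_comm]
  simp only [sum_perm _ (kern K L)]
  rw [Finset.sum_const, Finset.card_univ, Fintype.card_perm, Fintype.card_fin, nsmul_eq_mul,
    ← mul_assoc, one_div, inv_mul_cancel₀ (by positivity), one_mul]

theorem stmt_7 (n : ℕ) (hn : 1 ≤ n)
    (K L : Matrix (Fin n) (Fin n) ℝ) (hK : K.IsSymm) (hL : L.IsSymm) :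
    (1 / (n : ℝ) ^ 4) * ∑ i, ∑ j, ∑ q, ∑ r, symmKernel K L i j q r
      = (1 / (n : ℝ) ^ 2) * (K * centeringMatrix n * L * centeringMatrix n).trace := by
  have hn0 : (n : ℝ) ≠ 0 := by positivity
  rw [sum_symm]
  set A : ℝ := ∑ i, ∑ j, K i j * L i j with hA
  set k : Fin n → ℝ := fun i => ∑ j, K i j with hk
  set l : Fin n → ℝ := fun i => ∑ j, L i j with hl
  set B : ℝ := ∑ i, k i * l i with hB
  set C : ℝ := (∑ i, k i) * (∑ i, l i) with hC
  have hLs : ∀ i j, L i j = L j i := fun i j => hL.apply j i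
  have hKs : ∀ i j, K i j = K j i := fun i j => hK.apply j i
  have lhs : ∑ i, ∑ j, ∑ q, ∑ r, kern K L ![i, j, q, r]
      = n ^ 2 * A + C - 2 * n * B := by
    have e : ∀ i j q r, kern K L ![i, j, q, r]
      = K i j * L i j + K i j * L q r - 2 * (K i j * L i q) := fun i j q r => by
        rw [← mul_assoc]; rfl
    simp only [e, Finset.sum_sub_distrib, Finset.sum_add_distrib, Finset.sum_const,
      Finset.card_univ, Fintype.card_fin, nsmul_eq_mul, ← Finset.mul_sum]
    have e1 : ∑ i, ∑ j, K i j * ∑ q, ∑ r, L q r = C := by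
      simp only [← Finset.sum_mul]; rfl
    have e2 : ∑ i, ∑ j, K i j * ∑ q, L i q = B := by
      simp only [← Finset.sum_mul]; rfl
    rw [e1, e2]
    ring
  let J : Matrix (Fin n) (Fin n) ℝ := Matrix.of (fun _ _ => (1 : ℝ))
  have t1 : (K * L).trace = A := by
    simp only [Matrix.trace, Matrix.diag, Matrix.mul_apply, hA]
    exact Finset.sum_congr rfl fun i _ => Finset.sum_congr rfl fun j _ => by rw [hLs j i]
  have KJ : ∀ i j, (K * J) i j = k i := fun i j => by simp [Matrix.mul_apply, J, hk]
  have LJ : ∀ i j, (L * J) i j = l i := fun i j => by simp [Matrix.mul_apply, J, hl]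
  have t2 : (K * J * L).trace = B := by
    simp only [Matrix.trace, Matrix.diag, Matrix.mul_apply (M := K * J), KJ, ← Finset.mul_sum, hB]
    exact Finset.sum_congr rfl fun i _ => by
      congr 1
      exact Finset.sum_congr rfl fun j _ => hLs j i
  have t3 : (K * L * J).trace = B := by
    rw [Matrix.mul_assoc]
    simp only [Matrix.trace, Matrix.diag, Matrix.mul_apply (M := K), LJ, hB]
    rw [Finset.sum_comm]
    simp only [← Finset.sum_mul]
    exact Finset.sum_congr rfl fun i _ => by
      congr 1
      exact Finset.sum_congr rfl fun j _ => hKs j i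
  have t4 : (K * J * L * J).trace = C := by
    rw [Matrix.mul_assoc (K * J)]
    simp only [Matrix.trace, Matrix.diag, Matrix.mul_apply (M := K * J), KJ, LJ, ← Finset.mul_sum,
      ← Finset.sum_mul, hC]
  have rhs : (K * centeringMatrix n * L * centeringMatrix n).trace
      = A - (n : ℝ)⁻¹ * B - (n : ℝ)⁻¹ * B + (n : ℝ)⁻¹ * (n : ℝ)⁻¹ * C := by
    have hH : centeringMatrix n = 1 - (n : ℝ)⁻¹ • J := rfl
    rw [hH]
    simp only [mul_sub, sub_mul, mul_one, Matrix.mul_smul, Matrix.smul_mul, Matrix.trace_sub,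
      Matrix.trace_smul, t1, t2, t3, t4, smul_eq_mul]
    ring
  rw [lhs, rhs]
  field_simp
  ring
end
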